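/- For any graph G on n vertices and any odd t ≥ 1, the number of closed-form inequality n^{k−t} · |Hom(P_k; G)|^t ≥ |Hom(P_t; G)|^k holds for all odd k ≥ t. -/

import Mathlib

/-- The number of graph homomorphisms from `F` to `G`. -/
noncomputable def homCount {α β : Type*} (F : SimpleGraph α) (G : SimpleGraph β) : ℕ :=
  Nat.card (F →g G)

open Finset Real

section WalkCount

variable {V : Type*} [Fintype V]

open Classical in
/-- The number of walks of length `k` in `G` starting at `a`, as a real number. -/
noncomputable def walkCount (G : SimpleGraph V) : ℕ → V → ℝ
  | 0, _ => 1
  | k + 1, a => ∑ b, if G.Adj a b then walkCount G k b else 0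

/-- The number of walks of length `k` in `G`, as a real number. -/
noncomputable def totalWalkCount (G : SimpleGraph V) (k : ℕ) : ℝ := ∑ a, walkCount G k a

variable (G : SimpleGraph V)

lemma walkCount_nonneg (k : ℕ) (a : V) : 0 ≤ walkCount G k a := by
  induction k generalizing a with
  | zero => simp [walkCount]
  | succ k ih =>
    rw [walkCount]
    exact sum_nonneg fun b _ => by split_ifs <;> simp [ih]

lemma walkCount_pos {a b : V} (h : G.Adj a b) (k : ℕ) : 0 < walkCount G k a := by
  classical
  induction k generalizing a b with
  | zero => simp [walkCount]
  | succ k ih =>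
    rw [walkCount]
    refine sum_pos' (fun c _ => ?_) ⟨b, mem_univ b, ?_⟩
    · split_ifs <;> simp [walkCount_nonneg]
    · simpa [h] using ih h.symm

lemma totalWalkCount_nonneg (k : ℕ) : 0 ≤ totalWalkCount G k :=
  sum_nonneg fun a _ => walkCount_nonneg G k a

open Classical in
lemma sum_adj_walkCount_mul (i : ℕ) (g : V → ℝ) :
    ∑ a, ∑ b, (if G.Adj a b then g a * walkCount G i b else 0) =
      ∑ a, g a * walkCount G (i + 1) a := by
  simp only [walkCount, mul_sum, mul_ite, mul_zero]

open Classical in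
lemma sum_adj_mul_walkCount (i : ℕ) (g : V → ℝ) :
    ∑ a, ∑ b, (if G.Adj a b then walkCount G i a * g b else 0) =
      ∑ b, walkCount G (i + 1) b * g b := by
  rw [sum_comm]
  simp only [walkCount, sum_mul, ite_mul, zero_mul, G.adj_comm]

lemma sum_walkCount_mul_walkCount (i j : ℕ) :
    ∑ a, walkCount G i a * walkCount G j a = totalWalkCount G (i + j) := by
  induction i generalizing j with
  | zero => simp [walkCount, totalWalkCount]
  | succ i ih =>
    rw [← sum_adj_mul_walkCount, sum_adj_walkCount_mul, ih]
    congr 1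
    omega

open Classical in
lemma sum_paths_eq_sum_mul_walkCount (k : ℕ) (g : V → ℝ) :
    ∑ h : Fin (k + 1) → V,
        (if ∀ i : Fin k, G.Adj (h i.castSucc) (h i.succ) then g (h 0) else 0) =
      ∑ a, g a * walkCount G k a := by
  induction k generalizing g with
  | zero =>
    simp only [IsEmpty.forall_iff, if_true, walkCount, mul_one]
    exact Fintype.sum_equiv (Equiv.funUnique (Fin 1) V) _ _ fun h => rfl
  | succ k ih =>
    rw [← (Fin.consEquiv fun _ : Fin (k + 2) => V).sum_comp, Fintype.sum_prod_type, sum_comm]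
    have key : ∀ h : Fin (k + 1) → V,
        ∑ a, (if ∀ i : Fin (k + 1),
            G.Adj ((Fin.consEquiv fun _ : Fin (k + 2) => V) (a, h) i.castSucc)
              ((Fin.consEquiv fun _ : Fin (k + 2) => V) (a, h) i.succ)
            then g ((Fin.consEquiv fun _ : Fin (k + 2) => V) (a, h) 0) else 0) =
          if ∀ i : Fin k, G.Adj (h i.castSucc) (h i.succ)
            then ∑ a, (if G.Adj a (h 0) then g a else 0) else 0 := by
      intro h
      by_cases hh : ∀ i : Fin k, G.Adj (h i.castSucc) (h i.succ)
      · simp [Fin.forall_fin_succ, Fin.consEquiv, hh]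
      · simp [Fin.forall_fin_succ, Fin.consEquiv, hh]
    rw [sum_congr rfl fun h _ => key h, ih fun b => ∑ a, if G.Adj a b then g a else 0,
      ← sum_adj_walkCount_mul, sum_comm]
    simp only [sum_mul, ite_mul, zero_mul]

/-- A homomorphism from a path is a sequence of vertices with adjacent consecutive terms. -/
def pathGraphHomEquiv (k : ℕ) :
    (SimpleGraph.pathGraph (k + 1) →g G) ≃
      {h : Fin (k + 1) → V // ∀ i : Fin k, G.Adj (h i.castSucc) (h i.succ)} where
  toFun f := ⟨f, fun i => f.map_rel (by simp [SimpleGraph.pathGraph_adj])⟩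
  invFun h := ⟨h.1, by
    have key : ∀ a b : Fin (k + 1), (a : ℕ) + 1 = b → G.Adj (h.1 a) (h.1 b) := by
      intro a b hab
      have := h.2 ⟨a, by omega⟩
      rwa [show b = (⟨a, by omega⟩ : Fin k).succ from Fin.ext hab.symm]
    intro a b hab
    rcases SimpleGraph.pathGraph_adj.1 hab with hab | hab
    · exact key a b hab
    · exact (key b a hab).symm⟩
  left_inv _ := rfl
  right_inv _ := rfl

lemma homCount_pathGraph (k : ℕ) :
    (homCount (SimpleGraph.pathGraph (k + 1)) G : ℝ) = totalWalkCount G k := by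
  classical
  have := sum_paths_eq_sum_mul_walkCount G k fun _ => 1
  simp only [one_mul] at this
  rw [totalWalkCount, ← this, homCount, Nat.card_congr (pathGraphHomEquiv G k),
    Nat.card_eq_fintype_card, Fintype.card_subtype]
  simp

lemma exists_adj_of_totalWalkCount_pos {t : ℕ} (ht : 1 ≤ t) (hw : 0 < totalWalkCount G t) :
    ∃ a b, G.Adj a b := by
  by_contra! h
  obtain ⟨s, rfl⟩ := Nat.exists_eq_add_of_le' ht
  simp [totalWalkCount, walkCount, h] at hw

lemma totalWalkCount_pos {a b : V} (h : G.Adj a b) (k : ℕ) : 0 < totalWalkCount G k :=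
  sum_pos' (fun c _ => walkCount_nonneg G k c) ⟨a, mem_univ a, walkCount_pos G h k⟩

/-- Up to normalization, the mean of `log (walkCount i / walkCount j)` at the `i`-th vertex
of a uniformly random walk of length `i + j`. -/
noncomputable def walkLogRatio (i j : ℕ) : ℝ :=
  ∑ a, walkCount G i a * walkCount G j a * (log (walkCount G i a) - log (walkCount G j a))

/-- Traversing one edge of a uniformly random walk of length `i + j + 1` three times instead of
once gives a random walk of length `i + j + 3`, whose entropy is a lower bound for the logarithm
of the number of such walks. -/
lemma walkLogRatio_sub_le (i j : ℕ) (hw : 0 < totalWalkCount G (i + j + 1)) :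
    walkLogRatio G (i + 1) j - walkLogRatio G i (j + 1) ≤
      totalWalkCount G (i + j + 1) *
        (log (totalWalkCount G (i + j + 3)) - log (totalWalkCount G (i + j + 1))) := by
  classical
  obtain ⟨a₀, b₀, h₀⟩ := exists_adj_of_totalWalkCount_pos G (by omega) hw
  have hM := totalWalkCount_pos G h₀ (i + j + 3)
  set w := totalWalkCount G (i + j + 1) with hwdef
  set M := totalWalkCount G (i + j + 3) with hMdef
  set f := walkCount G with hf
  have pointwise : ∀ a b, (if G.Adj a b then f j a * (log (f (i + 1) a) - log (f j a)) * f i b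
        else 0) + (if G.Adj a b then f j a * (f i b * (log (f (j + 1) b) - log (f i b))) else 0)
        + (if G.Adj a b then f j a * (log w - log M) * f i b else 0) ≤
      (if G.Adj a b then w / M * f (i + 1) a * f (j + 1) b else 0) -
        (if G.Adj a b then f j a * f i b else 0) := by
    intro a b
    split_ifs with h
    · have h1 := walkCount_pos G h (i + 1)
      have h2 := walkCount_pos G h j
      have h3 := walkCount_pos G h.symm i
      have h4 := walkCount_pos G h.symm (j + 1)
      simp only [← hf] at h1 h2 h3 h4
      have hlog := log_le_sub_one_of_pos
        (show 0 < w * f (i + 1) a * f (j + 1) b / (M * f j a * f i b) by positivity)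
      rw [log_div (by positivity) (by positivity), log_mul (by positivity) (by positivity),
        log_mul (by positivity) (by positivity), log_mul (by positivity) (by positivity),
        log_mul (by positivity) (by positivity)] at hlog
      have := mul_le_mul_of_nonneg_left hlog (mul_pos h2 h3).le
      have e : f j a * f i b * (w * f (i + 1) a * f (j + 1) b / (M * f j a * f i b) - 1) =
          w / M * f (i + 1) a * f (j + 1) b - f j a * f i b := by
        field_simp
      rw [e] at this
      linarith
    · simp
  have total := sum_le_sum fun a (_ : a ∈ univ) => sum_le_sum fun b (_ : b ∈ univ) => pointwise a b
  simp only [sum_add_distrib, sum_sub_distrib] at total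
  rw [sum_adj_walkCount_mul, sum_adj_mul_walkCount, sum_adj_walkCount_mul, sum_adj_walkCount_mul,
    sum_adj_walkCount_mul] at total
  have e1 : ∑ a, f j a * (log (f (i + 1) a) - log (f j a)) * f (i + 1) a =
      walkLogRatio G (i + 1) j := sum_congr rfl fun a _ => by ring
  have e2 : ∑ b, f (j + 1) b * (f i b * (log (f (j + 1) b) - log (f i b))) =
      -walkLogRatio G i (j + 1) := by
    rw [walkLogRatio, ← sum_neg_distrib]
    exact sum_congr rfl fun a _ => by ring
  have e3 : ∑ a, f j a * f (i + 1) a = w := by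
    rw [hf, sum_walkCount_mul_walkCount, hwdef]
    congr 1
    omega
  have e4 : ∑ a, f j a * (log w - log M) * f (i + 1) a = w * (log w - log M) := by
    rw [← e3, sum_mul]
    exact sum_congr rfl fun a _ => by ring
  have e5 : ∑ a, w / M * f (i + 1) a * f (j + 1 + 1) a = w := by
    have : ∑ a, f (i + 1) a * f (j + 1 + 1) a = M := by
      rw [hf, sum_walkCount_mul_walkCount, hMdef]
      congr 1
      omega
    simp only [mul_assoc, ← mul_sum, this]
    field_simp
  rw [e1, e2, e3, e4, e5] at total
  linarith

lemma walkLogRatio_comm (i j : ℕ) : walkLogRatio G i j = -walkLogRatio G j i := by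
  simp only [walkLogRatio, ← sum_neg_distrib]
  exact sum_congr rfl fun a _ => by ring

lemma le_walkLogRatio_zero {t : ℕ} (hw : 0 < totalWalkCount G t) :
    totalWalkCount G t * (log (totalWalkCount G t) - log (Fintype.card V)) ≤
      walkLogRatio G t 0 := by
  have hn : 0 < (Fintype.card V : ℝ) := by
    rcases isEmpty_or_nonempty V with h | h
    · simp [totalWalkCount] at hw
    · exact_mod_cast Fintype.card_pos
  set w := totalWalkCount G t with hwdef
  have pointwise : ∀ a, walkCount G t a * (log w - log (Fintype.card V)) -
      walkCount G t a * walkCount G 0 a * (log (walkCount G t a) - log (walkCount G 0 a)) ≤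
      w / Fintype.card V - walkCount G t a := by
    intro a
    simp only [walkCount, log_one, sub_zero, mul_one]
    rcases (walkCount_nonneg G t a).eq_or_lt with h | h
    · rw [← h]
      simp only [zero_mul, sub_zero]
      positivity
    · have hlog := log_le_sub_one_of_pos
        (show 0 < w / (Fintype.card V * walkCount G t a) by positivity)
      rw [log_div (by positivity) (by positivity), log_mul (by positivity) (by positivity)] at hlog
      have := mul_le_mul_of_nonneg_left hlog h.le
      have e : walkCount G t a * (w / (Fintype.card V * walkCount G t a) - 1) =
          w / Fintype.card V - walkCount G t a := by
        field_simp
      rw [e] at this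
      linarith
  have total := sum_le_sum fun a (_ : a ∈ univ) => pointwise a
  rw [sum_sub_distrib, sum_sub_distrib, ← sum_mul] at total
  change w * _ - walkLogRatio G t 0 ≤ _ - w at total
  have : ∑ _a : V, w / Fintype.card V = w := by
    rw [sum_const, card_univ, nsmul_eq_mul]
    field_simp
  linarith

lemma log_totalWalkCount_add_two {t : ℕ} (hw : 0 < totalWalkCount G t) :
    (t + 2) * log (totalWalkCount G t) ≤
      t * log (totalWalkCount G (t + 2)) + 2 * log (Fintype.card V) := by
  have telescope : ∀ s ≤ t, walkLogRatio G s (t - s) - walkLogRatio G 0 t ≤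
      s * (totalWalkCount G t *
        (log (totalWalkCount G (t + 2)) - log (totalWalkCount G t))) := by
    intro s
    induction s with
    | zero => simp
    | succ s ih =>
      intro hs
      obtain ⟨j, rfl⟩ := Nat.exists_eq_add_of_le hs
      have step := walkLogRatio_sub_le G s j (by convert hw using 2; omega)
      have prev := ih (by omega)
      rw [show s + 1 + j - s = j + 1 by omega] at prev
      rw [show s + 1 + j - (s + 1) = j by omega]
      rw [show s + j + 1 = s + 1 + j by omega, show s + j + 3 = s + 1 + j + 2 by omega] at step
      push_cast
      linarith
  have h := telescope t le_rfl
  rw [Nat.sub_self, walkLogRatio_comm G 0 t] at h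
  have h0 := le_walkLogRatio_zero G hw
  refine le_of_mul_le_mul_left ?_ hw
  linarith

lemma log_totalWalkCount_add_two_mul {t : ℕ} (ht : 1 ≤ t) (hw : 0 < totalWalkCount G t) (m : ℕ) :
    (t + 2 * m) * log (totalWalkCount G t) ≤
      t * log (totalWalkCount G (t + 2 * m)) + 2 * m * log (Fintype.card V) := by
  induction m with
  | zero => simp
  | succ m ih =>
    obtain ⟨a, b, hab⟩ := exists_adj_of_totalWalkCount_pos G ht hw
    have step := log_totalWalkCount_add_two G (totalWalkCount_pos G hab (t + 2 * m))
    rw [show t + 2 * (m + 1) = t + 2 * m + 2 by ring]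
    push_cast at step ⊢
    have ht' : (0 : ℝ) < t := by exact_mod_cast ht
    have hs : (0 : ℝ) < t + 2 * m := by positivity
    refine le_of_mul_le_mul_left ?_ hs
    have h1 := mul_le_mul_of_nonneg_left step ht'.le
    have h2 := mul_le_mul_of_nonneg_left ih (show (0 : ℝ) ≤ t + 2 * m + 2 by positivity)
    linarith

end WalkCount

/-- The homomorphism-count form of the Erdős–Simonovits conjecture: for odd
`k ≥ t ≥ 1`, `n^{k−t} · |Hom(P_k; G)|^t ≥ |Hom(P_t; G)|^k`. -/
theorem es_homCount (n t : ℕ) (ht : Odd t) (ht1 : 1 ≤ t) (G : SimpleGraph (Fin n)) :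
    ∀ k : ℕ, Odd k → t ≤ k →
      n ^ (k - t) * homCount (SimpleGraph.pathGraph (k + 1)) G ^ t ≥
        homCount (SimpleGraph.pathGraph (t + 1)) G ^ k := by
  intro k hk htk
  obtain ⟨m, rfl⟩ : ∃ m, k = t + 2 * m := by
    obtain ⟨a, rfl⟩ := ht
    obtain ⟨b, rfl⟩ := hk
    exact ⟨b - a, by omega⟩
  rw [ge_iff_le, ← Nat.cast_le (α := ℝ)]
  push_cast
  rw [homCount_pathGraph, homCount_pathGraph, Nat.add_sub_cancel_left]
  rcases (totalWalkCount_nonneg G t).eq_or_lt with hw | hw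
  · rw [← hw, zero_pow (by omega)]
    have := totalWalkCount_nonneg G (t + 2 * m)
    positivity
  obtain ⟨a, b, hab⟩ := exists_adj_of_totalWalkCount_pos G ht1 hw
  have hM := totalWalkCount_pos G hab (t + 2 * m)
  have hn : (0 : ℝ) < n := by exact_mod_cast a.pos
  have main := log_totalWalkCount_add_two_mul G ht1 hw m
  rw [Fintype.card_fin] at main
  rw [← log_le_log_iff (by positivity) (by positivity), log_mul (by positivity) (by positivity),
    log_pow, log_pow, log_pow]
  push_cast
  linarith
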